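/- arXiv:2605.27312 — 3 statements merged into one kernel-verified Lean document; each statement's English description precedes it below -/
import Mathlib

section
/- Let m ≤ 3 and W ⊆ {0,1,…,m}. If W is not one of the boundary cases, then the automorphism group of the abelian code C(3,m,W) equals the wreath product S_3 ≀ S_m in its product action on Z_3^m; if W is a boundary case, then the automorphism group equals S_{3^m}. -/
open Matrix

/-- The automorphism group of a binary code of length `|I|` (as a set of coordinate
permutations): those permutations of the index set that map the code onto itself. -/
def codeAut {I : Type} (C : Set (I → ZMod 2)) : Set (Equiv.Perm I) :=
  { π | (fun c => c ∘ ⇑π.symm) '' C = C }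

/-- The wreath product `S_α ≀ S_m` in its product action on `[α]^m`, realized as the
set of permutations of `Fin m → α` of the form `x ↦ (k ↦ σ_k (x (π⁻¹ k)))`. -/
def wreathPermSet (α : Type) (m : ℕ) : Set (Equiv.Perm (Fin m → α)) :=
  { f | ∃ (σ : Fin m → Equiv.Perm α) (π : Equiv.Perm (Fin m)),
      ∀ (x : Fin m → α) (k : Fin m), f x k = σ k (x (π⁻¹ k)) }

/-- The abelian code `C(n, m, W)`: binary vectors indexed by `(Z_n)^m` whose finite-field
DFT (with respect to a primitive `n`-th root of unity `α` in a field `K` of characteristic 2)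
vanishes at every frequency `j` whose Hamming weight lies outside `W`. -/
def abelianCode (n m : ℕ) [NeZero n] (W : Set ℕ) (K : Type) [Field K] (α : K) :
    Set ((Fin m → ZMod n) → ZMod 2) :=
  { a | ∀ j : Fin m → ZMod n, hammingNorm j ∉ W →
      ∑ i : Fin m → ZMod n, (if a i = 1 then (1 : K) else 0) * α ^ (∑ k, i k * j k).val = 0 }

/-- The four boundary cases of weight sets: `∅` (zero code), `{0}` (repetition code),
`{1,…,m}` (single parity check code), `{0,1,…,m}` (full space). -/
def BoundaryW (m : ℕ) (W : Set ℕ) : Prop :=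
  W = ∅ ∨ W = {0} ∨ W = Set.Icc 1 m ∨ W = Set.Iic m

/-!
Over the field `K` the projector onto the code, conjugated by the Fourier transform, is diagonal;
its entry at a pair of positions at Hamming distance `d` is a sum of Krawtchouk polynomials. The
generating function of these is `(1 + X) ^ d` in characteristic two, so the entry is the parity of
the number of subsets of a `d`-element set with size in `W`. This projector is symmetric, and a
symmetric idempotent matrix is determined by its range, so a permutation preserves the code if and
only if it preserves all these parities.

By induction on `d` the parities are constant for `1 ≤ d ≤ m` exactly in the boundary cases, where
every permutation is therefore an automorphism. Otherwise, as `m ≤ 3`, some distance `e` has a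
parity shared by no other distance in that range, and automorphisms preserve the relation of being
at distance `e`. It recovers all distances: for `e = 1` they are its path lengths, and otherwise one
counts common neighbours. The counts are strictly monotone in the distance if `e = m`, while for
`e = 2`, `m = 3` they are `2 * (n - 1) * (n - 2)` at distance `1` and `6 * (n - 2)` at distance `3`,
which differ since `n` is odd. So automorphisms are Hamming isometries, and these form the wreath
product because an isometry maps lines to lines and respects closest points on them.
-/

section HammingIsometries

variable {ι α : Type*} [Fintype ι] [DecidableEq ι] [DecidableEq α]

lemma hammingDist_update_left (x y : ι → α) (k : ι) (a : α) :
    hammingDist (Function.update x k a) y =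
      hammingDist (Function.update x k (y k)) y + if a = y k then 0 else 1 := by
  have split_coord (b : α) : hammingDist (Function.update x k b) y =
      (if b = y k then 0 else 1) + ∑ i ∈ Finset.univ.erase k, if x i = y i then 0 else 1 := by
    simp only [hammingDist, Finset.card_filter, ne_eq, ite_not]
    rw [← Finset.add_sum_erase _ _ (Finset.mem_univ k), Function.update_self]
    congr 1
    refine Finset.sum_congr rfl fun i hi ↦ ?_
    rw [Function.update_of_ne (Finset.ne_of_mem_erase hi)]
  rw [split_coord a, split_coord (y k), if_pos rfl]
  ring

lemma hammingDist_update_self (x : ι → α) {k : ι} {a : α} (ha : a ≠ x k) :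
    hammingDist (Function.update x k a) x = 1 := by
  simp [hammingDist_update_left, ha]

lemma hammingDist_update_update_le_one (x : ι → α) (k : ι) (a b : α) :
    hammingDist (Function.update x k a) (Function.update x k b) ≤ 1 := by
  rw [hammingDist_update_left]
  simp only [Function.update_self, hammingDist_self]
  split_ifs <;> simp

lemma exists_eq_update_of_hammingDist_eq_one {x y : ι → α} (h : hammingDist x y = 1) :
    ∃ k, y k ≠ x k ∧ y = Function.update x k (y k) := by
  obtain ⟨k, hk⟩ := Finset.card_eq_one.mp h
  have differ_iff (i : ι) : x i ≠ y i ↔ i = k := by simpa using Finset.ext_iff.mp hk i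
  refine ⟨k, ((differ_iff k).mpr rfl).symm, Function.eq_update_iff.mpr ⟨rfl, fun i hi ↦ ?_⟩⟩
  by_contra hne
  exact hi ((differ_iff i).mp (Ne.symm hne))

lemma eq_update_of_hammingDist_le_one {x y : ι → α} {k : ι} {a : α} (ha : a ≠ x k)
    (hx : hammingDist x y ≤ 1) (hxa : hammingDist (Function.update x k a) y ≤ 1) :
    y = Function.update x k (y k) := by
  have dist_a := hammingDist_update_left x y k a
  have dist_x := hammingDist_update_left x y k (x k)
  rw [Function.update_eq_self] at dist_x
  suffices hammingDist (Function.update x k (y k)) y = 0 from (hammingDist_eq_zero.mp this).symm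
  split_ifs at dist_a dist_x with h₁ h₂
  · exact absurd (h₁.trans h₂.symm) ha
  all_goals lia

lemma exists_map_update_eq_update {f : (ι → α) → ι → α}
    (hf : ∀ x y, hammingDist (f x) (f y) = hammingDist x y) (x : ι → α) (k : ι) :
    ∃ r, ∀ a, f (Function.update x k a) =
      Function.update (f x) r (f (Function.update x k a) r) := by
  by_cases hα : ∃ b, b ≠ x k
  · obtain ⟨b, hb⟩ := hα
    have dist_image : hammingDist (f x) (f (Function.update x k b)) = 1 := by
      rw [hf, hammingDist_comm, hammingDist_update_self x hb]
    obtain ⟨r, hr, image_b⟩ := exists_eq_update_of_hammingDist_eq_one dist_image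
    refine ⟨r, fun a ↦ eq_update_of_hammingDist_le_one hr ?_ ?_⟩
    · rw [hf]
      simpa using hammingDist_update_update_le_one x k (x k) a
    · rw [← image_b, hf]
      exact hammingDist_update_update_le_one x k b a
  · push Not at hα
    exact ⟨k, fun a ↦ by simp [hα a]⟩

-- On the line `Function.update x k ·`, the point closest to `y` is `Function.update x k (y k)`;
-- an isometry carries this to the closest point of the image line.
lemma exists_coord_eq_of_isometry [Nontrivial α] {f : (ι → α) → ι → α}
    (hf : ∀ x y, hammingDist (f x) (f y) = hammingDist x y) (x : ι → α) (k : ι) :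
    ∃ r, ∀ y, f y r = f (Function.update x k (y k)) r := by
  obtain ⟨r, hr⟩ := exists_map_update_eq_update hf x k
  refine ⟨r, fun y ↦ ?_⟩
  have dist_line (a : α) :
      hammingDist (Function.update (f x) r (f y r)) (f y) +
          (if f (Function.update x k a) r = f y r then 0 else 1) =
        hammingDist (Function.update x k (y k)) y + if a = y k then 0 else 1 := by
    rw [← hammingDist_update_left, ← hr, hf, hammingDist_update_left]
  obtain ⟨b, hb⟩ := exists_ne (y k)
  have dist_b := dist_line b
  have dist_y := dist_line (y k)
  by_contra hne
  rw [if_neg hb] at dist_b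
  rw [if_neg (Ne.symm hne), if_pos rfl] at dist_y
  split_ifs at dist_b <;> lia

end HammingIsometries

section WreathProduct

variable {α : Type} {m : ℕ}

lemma mem_wreathPermSet_of_coord [Nontrivial α] {f : Equiv.Perm (Fin m → α)}
    {ρ : Fin m → Fin m} {σ : Fin m → α → α} (hf : ∀ x k, f x (ρ k) = σ k (x k)) :
    f ∈ wreathPermSet α m := by
  have σ_surjective (k : Fin m) : Function.Surjective (σ k) := fun b ↦
    ⟨f.symm (fun _ ↦ b) k, by rw [← hf, f.apply_symm_apply]⟩
  have ρ_injective : Function.Injective ρ := by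
    intro k l hkl
    by_contra hne
    obtain ⟨b, c, hbc⟩ := exists_pair_ne α
    obtain ⟨a, ha⟩ := σ_surjective k b
    obtain ⟨d, hd⟩ := σ_surjective l c
    have at_k := hf (Function.update (fun _ ↦ a) l d) k
    have at_l := hf (Function.update (fun _ ↦ a) l d) l
    rw [Function.update_of_ne hne, ha, hkl] at at_k
    rw [Function.update_self, hd] at at_l
    exact hbc (at_k.symm.trans at_l)
  have ρ_bijective := Finite.injective_iff_bijective.mp ρ_injective
  have σ_injective (k : Fin m) : Function.Injective (σ k) := by
    intro a b hab
    have images_eq : f (fun _ ↦ a) = f (Function.update (fun _ ↦ a) k b) := by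
      ext r
      obtain ⟨l, rfl⟩ := ρ_bijective.surjective r
      rw [hf, hf]
      obtain rfl | hl := eq_or_ne l k
      · rw [Function.update_self, hab]
      · rw [Function.update_of_ne hl]
    simpa using congrFun (f.injective images_eq) k
  let π := Equiv.ofBijective ρ ρ_bijective
  refine ⟨fun k ↦ Equiv.ofBijective _ ⟨σ_injective (π⁻¹ k), σ_surjective (π⁻¹ k)⟩, π, ?_⟩
  intro x k
  exact (congrArg (f x) (π.apply_symm_apply k)).symm.trans (hf x (π⁻¹ k))

theorem mem_wreathPermSet_iff [DecidableEq α] {f : Equiv.Perm (Fin m → α)} :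
    f ∈ wreathPermSet α m ↔ ∀ x y, hammingDist (f x) (f y) = hammingDist x y := by
  refine ⟨fun ⟨σ, π, hf⟩ x y ↦ ?_, fun hf ↦ ?_⟩
  · exact Finset.card_equiv π⁻¹ fun k ↦ by simp [hf]
  · cases subsingleton_or_nontrivial α
    · exact ⟨1, 1, fun x k ↦ Subsingleton.elim _ _⟩
    · have x₀ : Fin m → α := Classical.arbitrary _
      choose ρ hρ using exists_coord_eq_of_isometry hf x₀
      exact mem_wreathPermSet_of_coord (σ := fun k a ↦ f (Function.update x₀ k a) (ρ k))
        fun x k ↦ hρ k x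

end WreathProduct

section DistanceRelations

variable {ι α : Type*} [Fintype ι] [DecidableEq α]

lemma hammingDist_map_le_of_map_le_one {f : (ι → α) → ι → α}
    (hf : ∀ x y, hammingDist x y = 1 → hammingDist (f x) (f y) ≤ 1) (x y : ι → α) :
    hammingDist (f x) (f y) ≤ hammingDist x y := by
  classical
  induction h : hammingDist x y generalizing x with
  | zero => simp [hammingDist_eq_zero.mp h]
  | succ d ih =>
    obtain ⟨k, hk⟩ := Function.ne_iff.mp (hammingDist_ne_zero.mp (by lia : hammingDist x y ≠ 0))
    let z := Function.update x k (y k)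
    have dist_xz : hammingDist x z = 1 := by
      rw [hammingDist_comm, hammingDist_update_self x (Ne.symm hk)]
    have dist_zy : hammingDist z y = d := by
      have := hammingDist_update_left x y k (x k)
      rw [Function.update_eq_self, if_neg hk] at this
      lia
    calc hammingDist (f x) (f y) ≤ hammingDist (f x) (f z) + hammingDist (f z) (f y) :=
          hammingDist_triangle _ _ _
      _ ≤ d + 1 := by linarith [hf x z dist_xz, ih z dist_zy]

theorem isometry_of_preserves_hammingDist_eq_one {f : Equiv.Perm (ι → α)}
    (hf : ∀ x y, hammingDist (f x) (f y) = 1 ↔ hammingDist x y = 1) (x y : ι → α) :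
    hammingDist (f x) (f y) = hammingDist x y := by
  refine le_antisymm (hammingDist_map_le_of_map_le_one (fun x y h ↦ ((hf x y).mpr h).le) x y) ?_
  simpa using hammingDist_map_le_of_map_le_one (f := f.symm)
    (fun x y h ↦ ((hf _ _).mp (by simpa using h)).le) (f x) (f y)

lemma hammingDist_mem_Icc {m : ℕ} {x y : Fin m → α} (h : x ≠ y) :
    hammingDist x y ∈ Set.Icc 1 m :=
  ⟨hammingDist_pos.mpr h, by simpa using hammingDist_le_card_fintype (x := x) (y := y)⟩

lemma hammingDist_add_card_agreeing (x y : ι → α) :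
    hammingDist x y + Finset.card {k | x k = y k} = Fintype.card ι := by
  rw [add_comm]
  exact Finset.card_filter_add_card_filter_not _

lemma hammingDist_eq_card_iff {x y : ι → α} :
    hammingDist x y = Fintype.card ι ↔ ∀ k, x k ≠ y k := by
  rw [hammingDist, ← Finset.card_univ, Finset.card_filter_eq_iff]
  simp

lemma hammingDist_add_one_eq_card_iff {x y : ι → α} :
    hammingDist x y + 1 = Fintype.card ι ↔ ∃ i, ∀ k, x k = y k ↔ k = i := by
  rw [← hammingDist_add_card_agreeing x y, add_right_inj, eq_comm, Finset.card_eq_one]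
  simp [Finset.ext_iff]

variable [Fintype α]

/-- The number of words at Hamming distance `e` from both `x` and `y`: an invariant of the pair
under all permutations preserving the relation `hammingDist x y = e`, used to recover the other
distances from that relation. -/
def commonNeighborCount [DecidableEq ι] (e : ℕ) (x y : ι → α) : ℕ :=
  Finset.card {z | hammingDist x z = e ∧ hammingDist y z = e}

lemma commonNeighborCount_map [DecidableEq ι] {f : Equiv.Perm (ι → α)} {e : ℕ}
    (hf : ∀ x y, hammingDist (f x) (f y) = e ↔ hammingDist x y = e) (x y : ι → α) :
    commonNeighborCount e (f x) (f y) = commonNeighborCount e x y :=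
  (Finset.card_equiv f fun z ↦ by simp [hf]).symm

lemma card_filter_ne_and_ne (a b : α) :
    Finset.card {c | a ≠ c ∧ b ≠ c} =
      if a = b then Fintype.card α - 1 else Fintype.card α - 2 := by
  have : ({c | a ≠ c ∧ b ≠ c} : Finset α) = {a, b}ᶜ := by
    ext c
    simp [eq_comm]
  rw [this, Finset.card_compl]
  split_ifs with h
  · simp [h]
  · rw [Finset.card_pair h]

lemma commonNeighborCount_card [DecidableEq ι] (x y : ι → α) :
    commonNeighborCount (Fintype.card ι) x y =
      (Fintype.card α - 2) ^ hammingDist x y *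
        (Fintype.card α - 1) ^ (Fintype.card ι - hammingDist x y) := by
  have filter_eq : ({z | (∀ k, x k ≠ z k) ∧ ∀ k, y k ≠ z k} : Finset (ι → α)) =
      Fintype.piFinset fun k ↦ {c | x k ≠ c ∧ y k ≠ c} := by
    ext z
    simp only [Finset.mem_filter_univ, Fintype.mem_piFinset, forall_and]
  simp only [commonNeighborCount, hammingDist_eq_card_iff]
  rw [filter_eq, Fintype.card_piFinset,
    Finset.prod_congr rfl fun k _ ↦ card_filter_ne_and_ne (x k) (y k), Finset.prod_ite,
    Finset.prod_const, Finset.prod_const, mul_comm, ← hammingDist_add_card_agreeing x y,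
    Nat.add_sub_cancel_left]
  rfl

lemma pow_mul_pow_sub_lt {a b d e m : ℕ} (ha : 0 < a) (hab : a < b) (hde : d < e) (hem : e ≤ m) :
    a ^ e * b ^ (m - e) < a ^ d * b ^ (m - d) := by
  have hb : 0 < b ^ (m - e) := pow_pos (ha.trans hab) _
  calc a ^ e * b ^ (m - e) = a ^ d * (a ^ (e - d) * b ^ (m - e)) := by
        rw [← mul_assoc, ← pow_add, Nat.add_sub_cancel' hde.le]
    _ < a ^ d * (b ^ (e - d) * b ^ (m - e)) := by
        gcongr
        lia
    _ = a ^ d * b ^ (m - d) := by rw [← pow_add]; congr 2; lia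

theorem isometry_of_preserves_hammingDist_eq_card (hα : 3 ≤ Fintype.card α)
    {f : Equiv.Perm (ι → α)}
    (hf : ∀ x y, hammingDist (f x) (f y) = Fintype.card ι ↔ hammingDist x y = Fintype.card ι)
    (x y : ι → α) : hammingDist (f x) (f y) = hammingDist x y := by
  classical
  have counts_eq := commonNeighborCount_map hf x y
  rw [commonNeighborCount_card, commonNeighborCount_card] at counts_eq
  by_contra hne
  rcases Nat.lt_or_gt_of_ne hne with hlt | hlt
  · exact (pow_mul_pow_sub_lt (by lia) (by lia) hlt hammingDist_le_card_fintype).ne' counts_eq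
  · exact (pow_mul_pow_sub_lt (by lia) (by lia) hlt hammingDist_le_card_fintype).ne counts_eq

lemma commonNeighborCount_card_sub_one [DecidableEq ι] {e : ℕ} (he : e + 1 = Fintype.card ι)
    (x y : ι → α) :
    commonNeighborCount e x y =
      ∑ i, ∑ j, ∏ k, Finset.card {c | (x k = c ↔ k = i) ∧ (y k = c ↔ k = j)} := by
  let agreeing (p : ι × ι) : Finset (ι → α) :=
    Fintype.piFinset fun k ↦ {c | (x k = c ↔ k = p.1) ∧ (y k = c ↔ k = p.2)}
  have mem_agreeing (p : ι × ι) (z : ι → α) :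
      z ∈ agreeing p ↔ (∀ k, x k = z k ↔ k = p.1) ∧ ∀ k, y k = z k ↔ k = p.2 := by
    simp [agreeing, forall_and]
  have disjoint : ((Finset.univ : Finset (ι × ι)) : Set (ι × ι)).PairwiseDisjoint agreeing := by
    intro p _ q _ hpq
    refine Finset.disjoint_left.mpr fun z hp hq ↦ hpq ?_
    rw [mem_agreeing] at hp hq
    ext
    · exact (hq.1 _).mp ((hp.1 _).mpr rfl)
    · exact (hq.2 _).mp ((hp.2 _).mpr rfl)
  have filter_eq : ({z | hammingDist x z = e ∧ hammingDist y z = e} : Finset (ι → α)) =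
      Finset.univ.biUnion agreeing := by
    have dist_iff (w z : ι → α) : hammingDist w z = e ↔ ∃ i, ∀ k, w k = z k ↔ k = i := by
      rw [← hammingDist_add_one_eq_card_iff, ← he, add_left_inj]
    ext z
    simp only [Finset.mem_filter_univ, dist_iff, Finset.mem_biUnion, Finset.mem_univ, true_and,
      mem_agreeing, Prod.exists, exists_and_left, exists_and_right]
  simp only [commonNeighborCount, filter_eq, Finset.card_biUnion disjoint,
    Fintype.sum_prod_type, agreeing, Fintype.card_piFinset]

lemma card_filter_agreement (a b : α) (P Q : Prop) [Decidable P] [Decidable Q] :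
    Finset.card {c | (a = c ↔ P) ∧ (b = c ↔ Q)} =
      if a = b then
        if P then if Q then 1 else 0 else if Q then 0 else Fintype.card α - 1
      else if P then if Q then 0 else 1 else if Q then 1 else Fintype.card α - 2 := by
  by_cases hP : P
  · have filter_eq : ({c | (a = c ↔ P) ∧ (b = c ↔ Q)} : Finset α) =
        if a = b ↔ Q then {a} else ∅ := by grind
    rw [filter_eq]
    split_ifs <;> simp_all
  by_cases hQ : Q
  · have filter_eq : ({c | (a = c ↔ P) ∧ (b = c ↔ Q)} : Finset α) =
        if a = b then ∅ else {b} := by grind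
    rw [filter_eq]
    split_ifs <;> simp
  · simpa only [hP, hQ, iff_false, if_false] using card_filter_ne_and_ne a b

lemma commonNeighborCount_two_fin_three (x y : Fin 3 → α) :
    (hammingDist x y = 1 → commonNeighborCount 2 x y =
      2 * ((Fintype.card α - 1) * (Fintype.card α - 2))) ∧
    (hammingDist x y = 3 → commonNeighborCount 2 x y = 6 * (Fintype.card α - 2)) := by
  have dist_eq : hammingDist x y = ∑ k, if x k = y k then 0 else 1 := by
    simp only [hammingDist, Finset.card_filter, ne_eq, ite_not]
  rw [dist_eq, commonNeighborCount_card_sub_one (by simp)]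
  simp only [card_filter_agreement, Fin.sum_univ_three, Fin.prod_univ_three]
  by_cases h0 : x 0 = y 0 <;> by_cases h1 : x 1 = y 1 <;> by_cases h2 : x 2 = y 2 <;>
    simp [h0, h1, h2] <;> ring

theorem isometry_of_preserves_hammingDist_eq_two (hα : 3 ≤ Fintype.card α)
    (hα' : Fintype.card α ≠ 4) {f : Equiv.Perm (Fin 3 → α)}
    (hf : ∀ x y, hammingDist (f x) (f y) = 2 ↔ hammingDist x y = 2) (x y : Fin 3 → α) :
    hammingDist (f x) (f y) = hammingDist x y := by
  obtain rfl | hxy := eq_or_ne x y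
  · simp
  have pos : 0 < hammingDist x y := hammingDist_pos.mpr hxy
  have pos' : 0 < hammingDist (f x) (f y) := hammingDist_pos.mpr (f.injective.ne hxy)
  have le : hammingDist x y ≤ 3 := hammingDist_le_card_fintype
  have le' : hammingDist (f x) (f y) ≤ 3 := hammingDist_le_card_fintype
  have counts_eq := commonNeighborCount_map hf x y
  have counts_ne :
      2 * ((Fintype.card α - 1) * (Fintype.card α - 2)) ≠ 6 * (Fintype.card α - 2) := by
    rw [← mul_assoc]
    intro h
    have := Nat.eq_of_mul_eq_mul_right (by lia) h
    lia
  obtain ⟨count_one, count_three⟩ := commonNeighborCount_two_fin_three x y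
  obtain ⟨count_one', count_three'⟩ := commonNeighborCount_two_fin_three (f x) (f y)
  have := hf x y
  grind

theorem isometry_of_preserves_hammingDist_eq (hα : 3 ≤ Fintype.card α)
    (hα' : Fintype.card α ≠ 4) {m e : ℕ} (hm : m ≤ 3) (he : e ∈ Set.Icc 1 m)
    {f : Equiv.Perm (Fin m → α)}
    (hf : ∀ x y, hammingDist (f x) (f y) = e ↔ hammingDist x y = e) (x y : Fin m → α) :
    hammingDist (f x) (f y) = hammingDist x y := by
  obtain ⟨he₁, hem⟩ := he
  obtain rfl | rfl | ⟨rfl, rfl⟩ : e = 1 ∨ e = m ∨ e = 2 ∧ m = 3 := by lia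
  · exact isometry_of_preserves_hammingDist_eq_one hf x y
  · exact isometry_of_preserves_hammingDist_eq_card hα (by simpa using hf) x y
  · exact isometry_of_preserves_hammingDist_eq_two hα hα' hf x y

end DistanceRelations

section WeightParity

/-- The parity of the number of subsets of a `d`-element set whose size lies in `W`. The
projector onto the abelian code with weight set `W` has this entry at pairs of positions at
Hamming distance `d`. -/
noncomputable def weightParity (W : Set ℕ) (d : ℕ) : ZMod 2 :=
  ∑ w ∈ Finset.range (d + 1), W.indicator 1 w * (d.choose w : ZMod 2)

variable {W : Set ℕ} {m : ℕ}

lemma weightParity_univ (d : ℕ) : weightParity Set.univ d = 0 ^ d := by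
  simp only [weightParity, Set.indicator_univ, Pi.one_apply, one_mul]
  rw [← Nat.cast_sum, Nat.sum_range_choose, Nat.cast_pow]
  rfl

lemma indicator_one_eq_iff {v w : ℕ} :
    W.indicator (1 : ℕ → ZMod 2) v = W.indicator 1 w ↔ (v ∈ W ↔ w ∈ W) := by
  by_cases hv : v ∈ W <;> by_cases hw : w ∈ W <;> simp [hv, hw]

-- The proper nonempty subsets of a `d`-element set are even in number, `2 ^ d - 2`.
lemma weightParity_eq_of_const {d : ℕ} (hd : d ≠ 0)
    (hW : ∀ w, 1 ≤ w → w < d → (w ∈ W ↔ 1 ∈ W)) :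
    weightParity W d = W.indicator 1 0 + W.indicator 1 d := by
  obtain ⟨d, rfl⟩ := Nat.exists_eq_succ_of_ne_zero hd
  have choose_sum : ∑ w ∈ Finset.range d, ((d + 1).choose (w + 1) : ZMod 2) = 0 := by
    have sum_all := weightParity_univ (d + 1)
    simp only [weightParity, Set.indicator_univ, Pi.one_apply, one_mul] at sum_all
    rw [Finset.sum_range_succ, Finset.sum_range_succ', zero_pow d.succ_ne_zero] at sum_all
    simpa [add_assoc, CharTwo.add_self_eq_zero] using sum_all
  have middle : ∑ w ∈ Finset.range d,
      W.indicator 1 (w + 1) * ((d + 1).choose (w + 1) : ZMod 2) = 0 := by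
    rw [← mul_zero (W.indicator 1 1), ← choose_sum, Finset.mul_sum]
    refine Finset.sum_congr rfl fun w hw ↦ ?_
    rw [indicator_one_eq_iff.mpr (hW (w + 1) (by lia) (by simpa using hw))]
  rw [weightParity, Finset.sum_range_succ, Finset.sum_range_succ', middle]
  simp

lemma weightParity_const_iff :
    (∀ d ∈ Set.Icc 1 m, weightParity W d = weightParity W 1) ↔
      ∀ w ∈ Set.Icc 1 m, (w ∈ W ↔ 1 ∈ W) := by
  have parity_one : weightParity W 1 = W.indicator 1 0 + W.indicator 1 1 :=
    weightParity_eq_of_const one_ne_zero (by lia)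
  constructor
  · intro h w ⟨hw₁, hwm⟩
    induction w using Nat.strong_induction_on with
    | _ w ih =>
      have parity_w := h w ⟨hw₁, hwm⟩
      rw [weightParity_eq_of_const (by lia) fun v hv hvw ↦ ih v hvw hv (by lia), parity_one,
        add_right_inj] at parity_w
      exact indicator_one_eq_iff.mp parity_w
  · intro h d ⟨hd₁, hdm⟩
    rw [weightParity_eq_of_const (by lia) fun w hw hwd ↦ h w ⟨hw, by lia⟩, parity_one,
      indicator_one_eq_iff.mpr (h d ⟨hd₁, hdm⟩)]

lemma mem_iff_one_mem_of_boundaryW (h : BoundaryW m W) :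
    ∀ w ∈ Set.Icc 1 m, (w ∈ W ↔ 1 ∈ W) := by
  rintro w ⟨hw₁, hwm⟩
  rcases h with rfl | rfl | rfl | rfl <;> simp <;> lia

lemma boundaryW_of_mem_iff_one_mem (hW : W ⊆ Set.Iic m)
    (h : ∀ w ∈ Set.Icc 1 m, (w ∈ W ↔ 1 ∈ W)) : BoundaryW m W := by
  have mem_iff {w : ℕ} : w ∈ W ↔ w = 0 ∧ 0 ∈ W ∨ w ∈ Set.Icc 1 m ∧ 1 ∈ W := by
    obtain rfl | hw := eq_or_ne w 0
    · simp
    · have hw₁ : 1 ≤ w := by lia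
      have hwm : w ∈ W → w ≤ m := fun hw ↦ hW hw
      grind
  by_cases h₀ : 0 ∈ W <;> by_cases h₁ : 1 ∈ W <;>
    simp only [h₀, h₁, and_true, and_false, or_false, false_or] at mem_iff
  · exact .inr <| .inr <| .inr <| by ext w; simp only [mem_iff, Set.mem_Icc, Set.mem_Iic]; lia
  · exact .inr <| .inl <| by ext w; simp [mem_iff]
  · exact .inr <| .inr <| .inl <| by ext w; simp [mem_iff]
  · exact .inl <| by ext w; simp [mem_iff]

lemma exists_isolated_of_not_const {κ : ℕ → ZMod 2} (hm : m ≤ 3)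
    (hκ : ¬∀ d ∈ Set.Icc 1 m, κ d = κ 1) :
    ∃ e ∈ Set.Icc 1 m, ∀ d ∈ Set.Icc 1 m, κ d = κ e ↔ d = e := by
  push Not at hκ
  obtain ⟨c, ⟨hc₁, hcm⟩, hc⟩ := hκ
  have two_values (d : ℕ) : κ d ≠ κ 1 → κ d = κ c := by
    generalize κ d = a, κ 1 = b, κ c = c at *
    decide +revert
  have hc₁' : c ≠ 1 := by rintro rfl; exact hc rfl
  by_cases unique : ∀ d ∈ Set.Icc 1 m, κ d = κ c → d = c
  · exact ⟨c, ⟨hc₁, hcm⟩, fun d hd ↦ ⟨unique d hd, fun h ↦ h ▸ rfl⟩⟩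
  · push Not at unique
    obtain ⟨b, ⟨hb₁, hbm⟩, hb, hbc⟩ := unique
    refine ⟨1, ⟨le_rfl, by lia⟩, fun d ⟨hd₁, hdm⟩ ↦ ⟨fun hd ↦ ?_, fun h ↦ h ▸ rfl⟩⟩
    by_contra hne
    obtain rfl | rfl : d = c ∨ d = b := by grind
    · exact hc hd
    · exact hc (hb ▸ hd)

end WeightParity

section SymmetricIdempotents

-- `E * F = F` and `F * E = E` as the ranges agree; transposing the first gives `F * E = F`.
lemma eq_of_isSymm_of_isIdempotentElem {I R : Type*} [Fintype I] [CommSemiring R]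
    {E F : Matrix I I R} (hE : E.IsSymm) (hF : F.IsSymm)
    (hE' : IsIdempotentElem E) (hF' : IsIdempotentElem F)
    (h : ∀ v, E *ᵥ v = v ↔ F *ᵥ v = v) : E = F := by
  classical
  have mul_eq {A B : Matrix I I R} (hB : IsIdempotentElem B)
      (hBA : ∀ v, B *ᵥ v = v → A *ᵥ v = v) : A * B = B := by
    refine Matrix.ext_of_mulVec_single fun i ↦ ?_
    rw [← Matrix.mulVec_mulVec]
    exact hBA _ (by rw [Matrix.mulVec_mulVec, hB.eq])
  calc E = F * E := (mul_eq hE' fun v ↦ (h v).mp).symm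
    _ = (E * F)ᵀ := by rw [Matrix.transpose_mul, hE.eq, hF.eq]
    _ = F := by rw [mul_eq hF' fun v ↦ (h v).mpr, hF.eq]

lemma mem_codeAut_iff {I : Type} {C : Set (I → ZMod 2)} {π : Equiv.Perm I} :
    π ∈ codeAut C ↔ ∀ c, c ∘ π ∈ C ↔ c ∈ C := by
  have mem_image (c : I → ZMod 2) : c ∈ (fun c ↦ c ∘ ⇑π.symm) '' C ↔ c ∘ π ∈ C := by
    constructor
    · rintro ⟨c, hc, rfl⟩
      simpa [Function.comp_assoc] using hc
    · exact fun hc ↦ ⟨_, hc, by simp [Function.comp_assoc]⟩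
  simp only [codeAut, Set.mem_ofPred_eq, Set.ext_iff, mem_image]

theorem mem_codeAut_fixedVectors_iff {I : Type} [Fintype I] {E : Matrix I I (ZMod 2)}
    (hE : E.IsSymm) (hE' : IsIdempotentElem E) {π : Equiv.Perm I} :
    π ∈ codeAut {a | E *ᵥ a = a} ↔ ∀ x y, E (π x) (π y) = E x y := by
  let F := E.submatrix π π
  have hF' : IsIdempotentElem F := by
    rw [IsIdempotentElem, Matrix.submatrix_mul_equiv, hE'.eq]
  have fixed_iff (c : I → ZMod 2) : F *ᵥ (c ∘ π) = c ∘ π ↔ E *ᵥ c = c := by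
    rw [Matrix.submatrix_mulVec_equiv, Function.comp_assoc, π.self_comp_symm, Function.comp_id,
      π.surjective.injective_comp_right.eq_iff]
  calc π ∈ codeAut {a | E *ᵥ a = a}
      ↔ ∀ c : I → ZMod 2, E *ᵥ (c ∘ π) = c ∘ π ↔ F *ᵥ (c ∘ π) = c ∘ π := by
        simp only [mem_codeAut_iff, Set.mem_ofPred_eq, fixed_iff]
    _ ↔ ∀ v : I → ZMod 2, E *ᵥ v = v ↔ F *ᵥ v = v :=
        (π.injective.surjective_comp_right.forall
          (p := fun v : I → ZMod 2 ↦ E *ᵥ v = v ↔ F *ᵥ v = v)).symm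
    _ ↔ E = F := ⟨eq_of_isSymm_of_isIdempotentElem hE (hE.submatrix π) hE' hF', fun h v ↦ h ▸ .rfl⟩
    _ ↔ ∀ x y, E (π x) (π y) = E x y := by
        simp only [← Matrix.ext_iff, F, Matrix.submatrix_apply, eq_comm]

end SymmetricIdempotents

section FourierTransform

open Polynomial

variable {ι R K : Type*} [Fintype ι] [CommRing R] [Field K] {ψ : AddChar R K}

lemma addChar_dotProduct (i j : ι → R) : ψ (i ⬝ᵥ j) = ∏ k, ψ (i k * j k) :=
  map_sum (AddChar.toAddMonoidHomEquiv ψ) (fun k ↦ i k * j k) Finset.univ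

lemma natCast_card_eq_one_of_isPrimitive [Fintype R] [CharP K 2] (hψ : ψ.IsPrimitive) :
    (Fintype.card R : K) = 1 := by
  rw [CharTwo.natCast_eq_ite, if_neg]
  intro hR
  obtain ⟨r, hr⟩ := exists_prime_addOrderOf_dvd_card 2 hR.two_dvd
  have r_ne_zero : r ≠ 0 := by
    rintro rfl
    simp at hr
  have two_nsmul_eq (s : R) : 2 • (r * s) = 0 := by
    rw [← smul_mul_assoc, ← hr, addOrderOf_nsmul_eq_zero, zero_mul]
  refine hψ r_ne_zero (DFunLike.ext _ _ fun s ↦ CharTwo.sq_injective ?_)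
  simp only [AddChar.mulShift_apply, AddChar.one_apply, ← AddChar.map_nsmul_eq_pow, two_nsmul_eq,
    AddChar.map_zero_eq_one, one_pow]

variable [DecidableEq R]

lemma X_pow_hammingNorm (j : ι → R) :
    (X : K[X]) ^ hammingNorm j = ∏ k, if j k = 0 then 1 else X := by
  rw [Finset.prod_ite, Finset.prod_const_one, one_mul, Finset.prod_const]
  rfl

variable [Fintype R]

lemma sum_addChar_mul_ite_X (hψ : ψ.IsPrimitive) (r : R) :
    ∑ s, C (ψ (r * s)) * (if s = 0 then 1 else X) =
      if r = 0 then 1 + ((Fintype.card R : K[X]) - 1) * X else 1 - X := by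
  have sum_char : ∑ s, ψ (r * s) = if r = 0 then (Fintype.card R : K) else 0 := by
    simpa [mul_comm] using AddChar.sum_mulShift r hψ
  have split_zero (s : R) : C (ψ (r * s)) * (if s = 0 then 1 else X) =
      C (ψ (r * s)) * X + if s = 0 then 1 - X else 0 := by
    split_ifs with h <;> simp [h]
  rw [Finset.sum_congr rfl fun s _ ↦ split_zero s, Finset.sum_add_distrib, ← Finset.sum_mul,
    ← map_sum, sum_char, Finset.sum_ite_eq' Finset.univ, if_pos (Finset.mem_univ _)]
  split_ifs
  · rw [map_natCast]
    ring
  · rw [map_zero]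
    ring

variable [DecidableEq ι]

-- The coefficients in `X` of the right-hand side are the Krawtchouk polynomials at
-- `hammingNorm i`.
lemma sum_addChar_mul_X_pow_hammingNorm (hψ : ψ.IsPrimitive) (i : ι → R) :
    ∑ j : ι → R, C (ψ (i ⬝ᵥ j)) * X ^ hammingNorm j =
      (1 + ((Fintype.card R : K[X]) - 1) * X) ^ (Fintype.card ι - hammingNorm i) *
        (1 - X) ^ hammingNorm i := by
  have card_zeros : Finset.card {k | i k = 0} = Fintype.card ι - hammingNorm i := by
    rw [← hammingDist_add_card_agreeing i 0, hammingDist_zero_right, Nat.add_sub_cancel_left]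
    rfl
  calc ∑ j : ι → R, C (ψ (i ⬝ᵥ j)) * X ^ hammingNorm j
      = ∑ j : ι → R, ∏ k, C (ψ (i k * j k)) * (if j k = 0 then 1 else X) := by
        simp only [addChar_dotProduct, map_prod, X_pow_hammingNorm, Finset.prod_mul_distrib]
    _ = ∏ k, ∑ s, C (ψ (i k * s)) * (if s = 0 then 1 else X) :=
        (Fintype.prod_sum fun k s ↦ C (ψ (i k * s)) * (if s = 0 then 1 else X)).symm
    _ = _ := by
        simp only [sum_addChar_mul_ite_X hψ, Finset.prod_ite, Finset.prod_const, card_zeros]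
        rfl

variable [CharP K 2]

lemma sum_addChar_hammingNorm_eq (hψ : ψ.IsPrimitive) (i : ι → R) (w : ℕ) :
    ∑ j : ι → R with hammingNorm j = w, ψ (i ⬝ᵥ j) = (hammingNorm i).choose w := by
  have generating := congrArg (coeff · w) (sum_addChar_mul_X_pow_hammingNorm hψ i)
  have card_eq : (Fintype.card R : K[X]) = 1 := by
    simpa using congrArg C (natCast_card_eq_one_of_isPrimitive hψ)
  simpa [card_eq, CharTwo.sub_eq_add, coeff_one_add_X_pow, Finset.sum_filter, coeff_X_pow,
    eq_comm] using generating

lemma sum_indicator_mul_addChar (hψ : ψ.IsPrimitive) (W : Set ℕ) (i : ι → R) :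
    ∑ j : ι → R, W.indicator 1 (hammingNorm j) * ψ (i ⬝ᵥ j) =
      ZMod.castHom (dvd_refl 2) K (weightParity W (hammingNorm i)) := by
  have map_indicator (w : ℕ) :
      ZMod.castHom (dvd_refl 2) K (W.indicator 1 w) = W.indicator 1 w := by
    by_cases hw : w ∈ W <;> simp [hw]
  have norm_mem_range (j : ι → R) : hammingNorm j ∈ Finset.range (Fintype.card ι + 1) :=
    Finset.mem_range_succ_iff.mpr hammingNorm_le_card_fintype
  calc ∑ j : ι → R, W.indicator 1 (hammingNorm j) * ψ (i ⬝ᵥ j)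
      = ∑ w ∈ Finset.range (Fintype.card ι + 1),
          W.indicator 1 w * ∑ j : ι → R with hammingNorm j = w, ψ (i ⬝ᵥ j) := by
        rw [← Finset.sum_fiberwise_of_maps_to fun j _ ↦ norm_mem_range j]
        refine Finset.sum_congr rfl fun w _ ↦ ?_
        rw [Finset.mul_sum]
        exact Finset.sum_congr rfl fun j hj ↦ by rw [(Finset.mem_filter_univ j).mp hj]
    _ = ∑ w ∈ Finset.range (hammingNorm i + 1),
          W.indicator 1 w * ((hammingNorm i).choose w : K) := by
        simp only [sum_addChar_hammingNorm_eq hψ]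
        refine (Finset.sum_subset ?_ fun w _ hw ↦ ?_).symm
        · exact Finset.range_subset_range.mpr (Nat.succ_le_succ hammingNorm_le_card_fintype)
        · rw [Nat.choose_eq_zero_of_lt (by simpa using hw), Nat.cast_zero, mul_zero]
    _ = _ := by simp only [weightParity, map_sum, map_mul, map_natCast, map_indicator]

end FourierTransform

section WeightProjector

variable {ι α : Type*} [Fintype ι] [DecidableEq α] {W : Set ℕ}

/-- The projector onto the words over `ZMod 2` whose Fourier transform is supported on the
frequencies with weight in `W`, given by its entries, which depend only on Hamming distances. -/
noncomputable def weightProjector (ι α : Type*) [Fintype ι] [DecidableEq α] (W : Set ℕ) :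
    Matrix (ι → α) (ι → α) (ZMod 2) :=
  .of fun x y ↦ weightParity W (hammingDist x y)

lemma weightProjector_isSymm : (weightProjector ι α W).IsSymm := by
  ext x y
  simp only [weightProjector, Matrix.transpose_apply, Matrix.of_apply, hammingDist_comm]

lemma weightProjector_univ : weightProjector ι α Set.univ = 1 := by
  ext x y
  simp [weightProjector, weightParity_univ, Matrix.one_apply, zero_pow_eq]

variable {R K : Type*} [CommRing R] [Field K] {ψ : AddChar R K}

/-- The matrix of the Fourier transform on `ι → R` with respect to the character `ψ`; rows are
indexed by frequencies. -/
def fourierMatrix (ι : Type*) [Fintype ι] (ψ : AddChar R K) : Matrix (ι → R) (ι → R) K :=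
  .of fun j x ↦ ψ (j ⬝ᵥ x)

variable [DecidableEq ι] [DecidableEq R] [Fintype R] [CharP K 2]

lemma fourierMatrix_inv_mul_diagonal_mul (hψ : ψ.IsPrimitive) (W : Set ℕ) :
    fourierMatrix ι ψ⁻¹ * Matrix.diagonal (fun j ↦ W.indicator 1 (hammingNorm j)) *
        fourierMatrix ι ψ =
      (weightProjector ι R W).map (ZMod.castHom (dvd_refl 2) K) := by
  ext x y
  rw [Matrix.map_apply, weightProjector, Matrix.of_apply, hammingDist_eq_hammingNorm,
    ← sum_indicator_mul_addChar hψ, Matrix.mul_apply]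
  refine Finset.sum_congr rfl fun j _ ↦ ?_
  rw [Matrix.mul_diagonal, fourierMatrix, fourierMatrix, Matrix.of_apply, Matrix.of_apply,
    AddChar.inv_apply, dotProduct_comm j y, add_dotProduct, neg_dotProduct,
    AddChar.map_add_eq_mul]
  ring

lemma fourierMatrix_inv_mul_self (hψ : ψ.IsPrimitive) :
    fourierMatrix ι ψ⁻¹ * fourierMatrix ι ψ = 1 := by
  simpa [weightProjector_univ] using fourierMatrix_inv_mul_diagonal_mul (ι := ι) hψ Set.univ

lemma weightProjector_isIdempotentElem (hψ : ψ.IsPrimitive) (W : Set ℕ) :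
    IsIdempotentElem (weightProjector ι R W) := by
  let D : Matrix (ι → R) (ι → R) K :=
    Matrix.diagonal fun j ↦ W.indicator 1 (hammingNorm j)
  have D_mul_D : D * D = D := by
    rw [Matrix.diagonal_mul_diagonal]
    congr! 2 with j
    by_cases hj : hammingNorm j ∈ W <;> simp [hj]
  have mul_inv : fourierMatrix ι ψ * fourierMatrix ι ψ⁻¹ = 1 :=
    mul_eq_one_comm.mp (fourierMatrix_inv_mul_self hψ)
  refine Matrix.map_injective (ZMod.castHom (dvd_refl 2) K).injective ?_
  calc (weightProjector ι R W * weightProjector ι R W).map (ZMod.castHom (dvd_refl 2) K)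
      = fourierMatrix ι ψ⁻¹ * D * (fourierMatrix ι ψ * fourierMatrix ι ψ⁻¹) * D *
          fourierMatrix ι ψ := by
        rw [Matrix.map_mul, ← fourierMatrix_inv_mul_diagonal_mul hψ]
        simp only [D, Matrix.mul_assoc]
    _ = fourierMatrix ι ψ⁻¹ * (D * D) * fourierMatrix ι ψ := by
        rw [mul_inv, Matrix.mul_one, Matrix.mul_assoc _ D D]
    _ = (weightProjector ι R W).map (ZMod.castHom (dvd_refl 2) K) := by
        rw [D_mul_D, fourierMatrix_inv_mul_diagonal_mul hψ]

lemma weightProjector_mulVec_eq_self_iff (hψ : ψ.IsPrimitive) (a : (ι → R) → ZMod 2) :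
    weightProjector ι R W *ᵥ a = a ↔ ∀ j, hammingNorm j ∉ W →
      (fourierMatrix ι ψ *ᵥ (ZMod.castHom (dvd_refl 2) K ∘ a)) j = 0 := by
  let φ := ZMod.castHom (dvd_refl 2) K
  let D : Matrix (ι → R) (ι → R) K :=
    Matrix.diagonal fun j ↦ W.indicator 1 (hammingNorm j)
  have inv_mul := fourierMatrix_inv_mul_self (ι := ι) hψ
  have fourier_injective : Function.Injective (fourierMatrix ι ψ).mulVec :=
    Matrix.mulVec_injective_of_isUnit (.of_mul_eq_one_right _ inv_mul)
  have map_mulVec : φ ∘ (weightProjector ι R W *ᵥ a) = (weightProjector ι R W).map φ *ᵥ (φ ∘ a) :=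
    funext fun x ↦ φ.map_mulVec _ _ x
  calc weightProjector ι R W *ᵥ a = a
      ↔ (weightProjector ι R W).map φ *ᵥ (φ ∘ a) = φ ∘ a := by
        rw [← map_mulVec, φ.injective.comp_left.eq_iff]
    _ ↔ D *ᵥ (fourierMatrix ι ψ *ᵥ (φ ∘ a)) = fourierMatrix ι ψ *ᵥ (φ ∘ a) := by
        rw [← fourier_injective.eq_iff, ← fourierMatrix_inv_mul_diagonal_mul hψ,
          Matrix.mulVec_mulVec, ← Matrix.mul_assoc, ← Matrix.mul_assoc,
          mul_eq_one_comm.mp inv_mul, Matrix.one_mul, Matrix.mulVec_mulVec]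
    _ ↔ ∀ j, hammingNorm j ∉ W → (fourierMatrix ι ψ *ᵥ (φ ∘ a)) j = 0 := by
        rw [funext_iff]
        refine forall_congr' fun j ↦ ?_
        by_cases hj : hammingNorm j ∈ W <;> simp [D, Matrix.mulVec_diagonal, hj, eq_comm]

end WeightProjector

section AbelianCodes

variable {n m : ℕ} [NeZero n] {W : Set ℕ} {K : Type} [Field K] [CharP K 2] {α : K}

lemma abelianCode_eq_fixedVectors (hα : IsPrimitiveRoot α n) (W : Set ℕ) :
    abelianCode n m W K α = {a | weightProjector (Fin m) (ZMod n) W *ᵥ a = a} := by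
  let φ := ZMod.castHom (dvd_refl 2) K
  have ite_eq (b : ZMod 2) : (if b = 1 then 1 else 0 : K) = φ b := by
    obtain rfl | rfl : b = 0 ∨ b = 1 := by decide +revert
    · simp
    · simp
  ext a
  rw [Set.mem_ofPred_eq, weightProjector_mulVec_eq_self_iff
    (AddChar.zmodChar_primitive_of_primitive_root n hα)]
  refine forall₂_congr fun j _ ↦ Eq.congr_left (Finset.sum_congr rfl fun i _ ↦ ?_)
  calc (if a i = 1 then (1 : K) else 0) * α ^ (i ⬝ᵥ j).val
      = AddChar.zmodChar n hα.pow_eq_one (j ⬝ᵥ i) * φ (a i) := by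
        rw [ite_eq, AddChar.zmodChar_apply, dotProduct_comm, mul_comm]
    _ = _ := rfl

theorem mem_codeAut_abelianCode_iff (hα : IsPrimitiveRoot α n)
    {π : Equiv.Perm (Fin m → ZMod n)} :
    π ∈ codeAut (abelianCode n m W K α) ↔
      ∀ x y, weightParity W (hammingDist (π x) (π y)) = weightParity W (hammingDist x y) := by
  rw [abelianCode_eq_fixedVectors hα]
  exact mem_codeAut_fixedVectors_iff weightProjector_isSymm
    (weightProjector_isIdempotentElem (AddChar.zmodChar_primitive_of_primitive_root n hα) W)

lemma ne_four_of_isPrimitiveRoot (hα : IsPrimitiveRoot α n) : n ≠ 4 := by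
  rintro rfl
  have := natCast_card_eq_one_of_isPrimitive (AddChar.zmodChar_primitive_of_primitive_root 4 hα)
  rw [ZMod.card, CharTwo.natCast_eq_ite, if_pos (by decide)] at this
  exact zero_ne_one this

theorem codeAut_abelianCode_eq_univ (hα : IsPrimitiveRoot α n) (h : BoundaryW m W) :
    codeAut (abelianCode n m W K α) = Set.univ := by
  have parity_const := weightParity_const_iff.mpr (mem_iff_one_mem_of_boundaryW h)
  refine Set.eq_univ_of_forall fun f ↦ (mem_codeAut_abelianCode_iff hα).mpr fun x y ↦ ?_
  obtain rfl | hxy := eq_or_ne x y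
  · simp only [hammingDist_self]
  · rw [parity_const _ (hammingDist_mem_Icc hxy),
      parity_const _ (hammingDist_mem_Icc (f.injective.ne hxy))]

theorem codeAut_abelianCode_eq_wreathPermSet (hα : IsPrimitiveRoot α n) (hn : 3 ≤ n)
    (hm : m ≤ 3) (hW : W ⊆ Set.Iic m) (h : ¬BoundaryW m W) :
    codeAut (abelianCode n m W K α) = wreathPermSet (ZMod n) m := by
  obtain ⟨e, he, isolated⟩ := exists_isolated_of_not_const hm fun parity_const ↦
    h (boundaryW_of_mem_iff_one_mem hW (weightParity_const_iff.mp parity_const))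
  ext f
  rw [mem_codeAut_abelianCode_iff hα, mem_wreathPermSet_iff]
  refine ⟨fun hf ↦ ?_, fun hf x y ↦ by rw [hf]⟩
  refine isometry_of_preserves_hammingDist_eq (by rwa [ZMod.card])
    (by rw [ZMod.card]; exact ne_four_of_isPrimitiveRoot hα) hm he fun x y ↦ ?_
  obtain rfl | hxy := eq_or_ne x y
  · simp only [hammingDist_self]
  · rw [← isolated _ (hammingDist_mem_Icc (f.injective.ne hxy)), hf,
      isolated _ (hammingDist_mem_Icc hxy)]

end AbelianCodes

theorem statement14_general (n m : ℕ) [NeZero n] (hn : 3 ≤ n) (hm3 : m ≤ 3)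
    (W : Set ℕ) (hW : W ⊆ Set.Iic m)
    (K : Type) [Field K] [CharP K 2] (α : K) (hα : IsPrimitiveRoot α n) :
    (¬ BoundaryW m W → codeAut (abelianCode n m W K α) = wreathPermSet (ZMod n) m) ∧
    (BoundaryW m W → codeAut (abelianCode n m W K α) = Set.univ) :=
  ⟨codeAut_abelianCode_eq_wreathPermSet hα hn hm3 hW, codeAut_abelianCode_eq_univ hα⟩

/-- For `1 ≤ m ≤ 3` and `W ⊆ {0, 1, …, m}` not a boundary case, the
automorphism group of `C(3, m, W)` is the wreath product `S_3 ≀ S_m` in its product action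
on `Z_3^m`; in the boundary cases it is the full symmetric group `S_{3^m}`. -/
theorem statement14 (m : ℕ) (hm1 : 1 ≤ m) (hm3 : m ≤ 3)
    (W : Set ℕ) (hW : W ⊆ Set.Iic m)
    (K : Type) [Field K] [CharP K 2] (α : K) (hα : IsPrimitiveRoot α 3) :
    (¬ BoundaryW m W → codeAut (abelianCode 3 m W K α) = wreathPermSet (ZMod 3) m) ∧
    (BoundaryW m W → codeAut (abelianCode 3 m W K α) = Set.univ) :=
  statement14_general 3 m le_rfl hm3 W hW K α hα
end

section
/- Let m ≥ 1, W ⊆ {0,1,…,m}, let A be an invertible m×m matrix over F_3, let b ∈ F_3^m, and let σ : F_3^m → F_3^m be the permutation σ(i) = Ai + b. Then σ is an automorphism of the abelian code C(3,m,W) if and only if for every x ∈ F_3^m with Hamming weight in W, the vector A^T x also has Hamming weight in W. -/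
open Matrix

/-!
Permuting the coordinates of a word by `x ↦ A x + b` multiplies its Fourier coefficient at `j` by a
unit and moves the frequency to `Aᵀ j`. Hence the permutation carries the code with frequency
support `S` onto the code with frequency support `(Aᵀ)⁻¹ S`, and everything reduces to recovering
`S` from its code.

This is possible when `S` is stable under doubling: squaring in characteristic two then merely
permutes the terms of the inverse transform of the indicator of `S`, so its values are idempotent,
that is `0` or `1`. They form a binary word whose spectrum is exactly the indicator of `S`. Supports
defined by Hamming weights qualify, since a primitive character into characteristic two makes `2` a
unit.
-/

lemma preimage_eq_self_iff_mapsTo {X : Type*} [Finite X] {f : X → X}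
    (hf : Function.Injective f) {S : Set X} :
    f ⁻¹' S = S ↔ Set.MapsTo f S S := by
  refine ⟨fun h => h.ge, fun h => ?_⟩
  have himage : f '' S = S := ((S.toFinite.injOn_iff_bijOn_of_mapsTo h).1 hf.injOn).image_eq
  calc f ⁻¹' S = f ⁻¹' (f '' S) := by rw [himage]
    _ = S := Set.preimage_image_eq S hf

section PrimitiveCharacters

variable {R K : Type*} [CommRing R] [CommRing K] {ψ : AddChar R K}

lemma isUnit_natCast_of_addChar_isPrimitive [Finite R] [IsReduced K] (p : ℕ)
    [Fact p.Prime] [CharP K p] (hψ : ψ.IsPrimitive) : IsUnit (p : R) := by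
  rw [isUnit_iff_mem_nonZeroDivisors_of_finite, mem_nonZeroDivisors_iff_right]
  intro a ha
  by_contra ha0
  refine hψ ha0 (AddChar.eq_one_iff.2 fun x => frobenius_inj K p ?_)
  rw [frobenius_def, map_one, AddChar.mulShift_apply, ← AddChar.map_nsmul_eq_pow, nsmul_eq_mul,
    ← mul_assoc, mul_comm (p : R), ha, zero_mul, AddChar.map_zero_eq_one]

lemma odd_card_of_isUnit_two [Fintype R] (h : IsUnit (2 : R)) : Odd (Fintype.card R) := by
  rw [← Nat.not_even_iff_odd, even_iff_two_dvd]
  exact fun hdvd => not_isUnit_prime_of_dvd_card hdvd (by exact_mod_cast h)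

end PrimitiveCharacters

section AffinePermutations

variable {ι R : Type*} [Fintype ι] [CommRing R] {A : Matrix ι ι R} {b : ι → R}
  {σ : Equiv.Perm (ι → R)}

lemma isUnit_of_affine_perm [DecidableEq ι] (hσ : ∀ x, σ x = A *ᵥ x + b) : IsUnit A := by
  rw [← mulVec_surjective_iff_isUnit]
  intro y
  obtain ⟨x, hx⟩ := σ.surjective (y + b)
  exact ⟨x, add_right_cancel ((hσ x).symm.trans hx)⟩

lemma transpose_mulVec_bijective_of_affine_perm (hσ : ∀ x, σ x = A *ᵥ x + b) :
    Function.Bijective (Aᵀ *ᵥ ·) := by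
  classical
  have hA : IsUnit Aᵀ := isUnit_transpose A |>.2 (isUnit_of_affine_perm hσ)
  exact ⟨mulVec_injective_of_isUnit hA, mulVec_surjective_iff_isUnit.2 hA⟩

end AffinePermutations

section FourierTransform

variable {ι R K : Type*} [Fintype ι] [DecidableEq ι] [CommRing R] [Fintype R] [CommRing K]

/-- The discrete Fourier transform on `ι → R` with kernel `ψ (i ⬝ᵥ j)`; taking `R = ZMod n` and
`ψ t = α ^ t` gives the transform in the definition of the abelian codes. -/
def dft (ψ : AddChar R K) (f : (ι → R) → K) (j : ι → R) : K :=
  ∑ i, f i * ψ (i ⬝ᵥ j)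

variable {ψ : AddChar R K}

lemma sum_addChar_dotProduct [IsDomain K] [DecidableEq R] (hψ : ψ.IsPrimitive) (v : ι → R) :
    ∑ u, ψ (u ⬝ᵥ v) = if v = 0 then (Fintype.card (ι → R) : K) else 0 := by
  split_ifs with hv
  · simp [hv]
  obtain ⟨k, hk⟩ := Function.ne_iff.1 hv
  obtain ⟨t, ht⟩ := AddChar.ne_one_iff.1 (hψ hk)
  let χ : AddChar (ι → R) K :=
    ψ.compAddMonoidHom (AddMonoidHom.mk' (· ⬝ᵥ v) fun u w => add_dotProduct u w v)
  have hχ : χ ≠ 1 := AddChar.ne_one_iff.2 ⟨Pi.single k t, by simpa [χ, mul_comm] using ht⟩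
  exact AddChar.sum_eq_zero_of_ne_one hχ

lemma dft_dft_inv [IsDomain K] (hψ : ψ.IsPrimitive) (g : (ι → R) → K) (j : ι → R) :
    dft ψ (dft ψ⁻¹ g) j = Fintype.card (ι → R) * g j := by
  classical
  calc dft ψ (dft ψ⁻¹ g) j
      = ∑ k, g k * ∑ i, ψ (i ⬝ᵥ (j - k)) := by
        simp only [dft, Finset.sum_mul, Finset.mul_sum]
        rw [Finset.sum_comm]
        refine Finset.sum_congr rfl fun k _ => Finset.sum_congr rfl fun i _ => ?_
        rw [mul_assoc, AddChar.inv_apply, ← AddChar.map_add_eq_mul, dotProduct_sub,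
          dotProduct_comm k i, neg_add_eq_sub]
    _ = Fintype.card (ι → R) * g j := by
        simp only [sum_addChar_dotProduct hψ, sub_eq_zero, mul_ite, mul_zero, Finset.sum_ite_eq,
          Finset.mem_univ, if_true, mul_comm]

lemma dft_comp_symm_of_affine (ψ : AddChar R K) {A : Matrix ι ι R} {b : ι → R}
    {σ : Equiv.Perm (ι → R)} (hσ : ∀ x, σ x = A *ᵥ x + b) (f : (ι → R) → K) (j : ι → R) :
    dft ψ (f ∘ σ.symm) j = ψ (b ⬝ᵥ j) * dft ψ f (Aᵀ *ᵥ j) := by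
  have hdot (i : ι → R) : σ i ⬝ᵥ j = b ⬝ᵥ j + i ⬝ᵥ (Aᵀ *ᵥ j) := by
    rw [hσ, add_dotProduct, dotProduct_transpose_mulVec, add_comm, dotProduct_comm j]
  rw [dft, dft, ← Equiv.sum_comp σ, Finset.mul_sum]
  refine Finset.sum_congr rfl fun i _ => ?_
  rw [Function.comp_apply, Equiv.symm_apply_apply, hdot, AddChar.map_add_eq_mul]
  ring

lemma dft_sq_eq_self_of_conjugate [CharP K 2] (h2 : IsUnit (2 : R)) (ψ : AddChar R K)
    {g : (ι → R) → K} (hg : ∀ j, g ((2 : R) • j) = g j ^ 2) (i : ι → R) :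
    dft ψ g i ^ 2 = dft ψ g i := by
  calc dft ψ g i ^ 2
      = ∑ j, g ((2 : R) • j) * ψ (((2 : R) • j) ⬝ᵥ i) := by
        rw [dft, CharTwo.sum_sq]
        refine Finset.sum_congr rfl fun j _ => ?_
        rw [mul_pow, hg, ← AddChar.map_nsmul_eq_pow, smul_dotProduct, two_nsmul, smul_eq_mul,
          two_mul]
    _ = dft ψ g i := h2.smul_bijective.sum_comp fun j => g j * ψ (j ⬝ᵥ i)

lemma exists_dft_cast_eq [CharP K 2] [IsDomain K] (hψ : ψ.IsPrimitive) {g : (ι → R) → K}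
    (hg : ∀ j, g ((2 : R) • j) = g j ^ 2) :
    ∃ c : (ι → R) → ZMod 2, dft ψ (fun i => (c i).cast) = g := by
  have h2 : IsUnit (2 : R) := by exact_mod_cast isUnit_natCast_of_addChar_isPrimitive 2 hψ
  have hcard : (Fintype.card (ι → R) : K) = 1 := by
    rw [CharTwo.natCast_eq_ite, if_neg]
    rw [Nat.not_even_iff_odd, Fintype.card_fun]
    exact (odd_card_of_isUnit_two h2).pow
  have hbinary (i : ι → R) : ∃ t : ZMod 2, (t.cast : K) = dft ψ⁻¹ g i := by
    have hidem : IsIdempotentElem (dft ψ⁻¹ g i) := by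
      rw [IsIdempotentElem, ← sq, dft_sq_eq_self_of_conjugate h2 ψ⁻¹ hg]
    rcases IsIdempotentElem.iff_eq_zero_or_one.1 hidem with h | h
    · exact ⟨0, by rw [h, ZMod.cast_zero]⟩
    · exact ⟨1, by rw [h, ZMod.cast_one']⟩
  choose c hc using hbinary
  refine ⟨c, funext fun j => ?_⟩
  rw [funext hc, dft_dft_inv hψ, hcard, one_mul]

end FourierTransform

section SpectralCodes

variable {ι R K : Type*} [Fintype ι] [DecidableEq ι] [CommRing R] [Fintype R] [CommRing K]

/-- The binary words on `ι → R` whose Fourier transform is supported in the set `S` of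
frequencies, bits being read as the elements `0` and `1` of `K`. -/
def spectralCode (ψ : AddChar R K) (S : Set (ι → R)) : Set ((ι → R) → ZMod 2) :=
  { c | ∀ j ∉ S, dft ψ (fun i => (c i).cast) j = 0 }

variable {ψ : AddChar R K}

lemma spectralCode_subset_iff [CharP K 2] [IsDomain K] (hψ : ψ.IsPrimitive) {S T : Set (ι → R)}
    (hS : ∀ j, (2 : R) • j ∈ S ↔ j ∈ S) : spectralCode ψ S ⊆ spectralCode ψ T ↔ S ⊆ T := by
  classical
  refine ⟨fun h j hj => ?_, fun h c hc j hj => hc j (mt (@h j) hj)⟩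
  obtain ⟨e, he⟩ := exists_dft_cast_eq hψ (g := S.indicator 1) fun j => by
    simp [Set.indicator_apply, hS]
  by_contra hjT
  have heS : e ∈ spectralCode ψ S := fun k hk => by rw [he, Set.indicator_of_notMem hk]
  have hzero := h heS j hjT
  rw [he, Set.indicator_of_mem hj] at hzero
  exact one_ne_zero hzero

lemma spectralCode_eq_iff [CharP K 2] [IsDomain K] (hψ : ψ.IsPrimitive) {S T : Set (ι → R)}
    (hS : ∀ j, (2 : R) • j ∈ S ↔ j ∈ S) (hT : ∀ j, (2 : R) • j ∈ T ↔ j ∈ T) :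
    spectralCode ψ S = spectralCode ψ T ↔ S = T := by
  rw [Set.Subset.antisymm_iff, Set.Subset.antisymm_iff, spectralCode_subset_iff hψ hS,
    spectralCode_subset_iff hψ hT]

variable {A : Matrix ι ι R} {b : ι → R} {σ : Equiv.Perm (ι → R)}

lemma comp_symm_mem_spectralCode_iff_of_affine_perm
    (hσ : ∀ x, σ x = A *ᵥ x + b) {S : Set (ι → R)} {c : (ι → R) → ZMod 2} :
    c ∘ σ.symm ∈ spectralCode ψ ((Aᵀ *ᵥ ·) ⁻¹' S) ↔ c ∈ spectralCode ψ S := by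
  have hdft (j : ι → R) : dft ψ (fun i => ((c ∘ σ.symm) i).cast) j = 0 ↔
      dft ψ (fun i => (c i).cast) (Aᵀ *ᵥ j) = 0 := by
    have haffine := dft_comp_symm_of_affine ψ hσ (fun i => (c i).cast) j
    rw [Function.comp_def] at haffine
    simp only [Function.comp_apply, haffine, (ψ.val_isUnit _).mul_right_eq_zero]
  simp only [spectralCode, Set.mem_ofPred_eq, Set.mem_preimage, hdft]
  exact ((transpose_mulVec_bijective_of_affine_perm hσ).surjective.forall
    (p := fun k => k ∉ S → dft ψ (fun i => (c i).cast) k = 0)).symm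

lemma image_comp_symm_spectralCode_of_affine_perm (hσ : ∀ x, σ x = A *ᵥ x + b)
    (S : Set (ι → R)) :
    (fun c => c ∘ σ.symm) '' spectralCode ψ S = spectralCode ψ ((Aᵀ *ᵥ ·) ⁻¹' S) := by
  have hinv (c : (ι → R) → ZMod 2) : (c ∘ σ) ∘ σ.symm = c := by
    rw [Function.comp_assoc, Equiv.self_comp_symm, Function.comp_id]
  ext c
  constructor
  · rintro ⟨a, ha, rfl⟩
    exact (comp_symm_mem_spectralCode_iff_of_affine_perm hσ).2 ha
  · intro hc
    rw [← hinv c] at hc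
    exact ⟨c ∘ σ, (comp_symm_mem_spectralCode_iff_of_affine_perm hσ).1 hc, hinv c⟩

end SpectralCodes

theorem mem_codeAut_spectralCode_iff_of_affine_perm {ι R : Type} {K : Type*} [Fintype ι]
    [DecidableEq ι] [CommRing R] [Fintype R] [CommRing K] [IsDomain K] [CharP K 2]
    {ψ : AddChar R K} (hψ : ψ.IsPrimitive) {S : Set (ι → R)}
    (hS : ∀ j, (2 : R) • j ∈ S ↔ j ∈ S) {A : Matrix ι ι R} {b : ι → R}
    {σ : Equiv.Perm (ι → R)} (hσ : ∀ x, σ x = A *ᵥ x + b) :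
    σ ∈ codeAut (spectralCode ψ S) ↔ Set.MapsTo (Aᵀ *ᵥ ·) S S := by
  have hpre (j : ι → R) : (2 : R) • j ∈ (Aᵀ *ᵥ ·) ⁻¹' S ↔ j ∈ (Aᵀ *ᵥ ·) ⁻¹' S := by
    simp only [Set.mem_preimage, mulVec_smul, hS]
  rw [codeAut, Set.mem_ofPred_eq, image_comp_symm_spectralCode_of_affine_perm hσ,
    spectralCode_eq_iff hψ hpre hS,
    preimage_eq_self_iff_mapsTo (transpose_mulVec_bijective_of_affine_perm hσ).injective]

lemma zmod_two_cast_eq_ite {K : Type*} [AddGroupWithOne K] (t : ZMod 2) :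
    (t.cast : K) = if t = 1 then 1 else 0 := by
  obtain rfl | rfl : t = 0 ∨ t = 1 := by revert t; decide
  · simp
  · simp [ZMod.cast_eq_val, ZMod.val_one]

lemma abelianCode_eq_spectralCode (n m : ℕ) [NeZero n] (W : Set ℕ) {K : Type} [Field K] {α : K}
    (hα : α ^ n = 1) :
    abelianCode n m W K α = spectralCode (AddChar.zmodChar n hα) { j | hammingNorm j ∈ W } := by
  simp only [abelianCode, spectralCode, dft, zmod_two_cast_eq_ite, AddChar.zmodChar_apply,
    Set.mem_ofPred_eq, dotProduct]

lemma hammingNorm_smul_of_isUnit {ι R : Type*} [Fintype ι] [Semiring R] [DecidableEq R] {r : R}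
    (hr : IsUnit r) (x : ι → R) : hammingNorm (r • x) = hammingNorm x :=
  hammingNorm_smul (fun _ => hr.isSMulRegular R) x

theorem statement16_general (n m : ℕ) [NeZero n] (W : Set ℕ) (K : Type) [Field K] [CharP K 2]
    (α : K) (hα : IsPrimitiveRoot α n) (A : Matrix (Fin m) (Fin m) (ZMod n)) (b : Fin m → ZMod n)
    (σ : Equiv.Perm (Fin m → ZMod n)) (hσ : ∀ x, σ x = A.mulVec x + b) :
    σ ∈ codeAut (abelianCode n m W K α) ↔
      ∀ x : Fin m → ZMod n, hammingNorm x ∈ W → hammingNorm (Aᵀ.mulVec x) ∈ W := by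
  have hψ := AddChar.zmodChar_primitive_of_primitive_root n hα
  have h2 : IsUnit (2 : ZMod n) := by exact_mod_cast isUnit_natCast_of_addChar_isPrimitive 2 hψ
  rw [abelianCode_eq_spectralCode n m W hα.pow_eq_one]
  exact mem_codeAut_spectralCode_iff_of_affine_perm hψ
    (fun j => by simp only [Set.mem_ofPred_eq, hammingNorm_smul_of_isUnit h2]) hσ

/-- A permutation `σ : x ↦ A x + b` of `F_3^m` (with `A` invertible) is
an automorphism of the abelian code `C(3, m, W)` iff `Aᵀ` preserves the set of vectors whose
Hamming weight lies in `W`. -/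
theorem statement16 (m : ℕ) (hm : 1 ≤ m) (W : Set ℕ) (hW : W ⊆ Set.Iic m)
    (K : Type) [Field K] [CharP K 2] (α : K) (hα : IsPrimitiveRoot α 3)
    (A : Matrix (Fin m) (Fin m) (ZMod 3)) (hA : IsUnit A) (b : Fin m → ZMod 3)
    (σ : Equiv.Perm (Fin m → ZMod 3)) (hσ : ∀ x, σ x = A.mulVec x + b) :
    σ ∈ codeAut (abelianCode 3 m W K α) ↔
      ∀ x : Fin m → ZMod 3, hammingNorm x ∈ W → hammingNorm (Aᵀ.mulVec x) ∈ W :=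
  statement16_general 3 m W K α hα A b σ hσ
end

section
/- Let m ≥ 1 and let W ⊆ {0,1,…,m} not be one of the boundary cases. Then the affine general linear group AGL(m,3), acting on F_3^m by x ↦ Ax + b with A invertible over F_3, is not a subgroup of the automorphism group of the abelian code C(3,m,W). -/
open Matrix

/-- The affine general linear group `AGL(m, 3)`, realized as the set of permutations of
`F_3^m` of the form `x ↦ A x + b` with `A` invertible. -/
def aglSet (m : ℕ) : Set (Equiv.Perm (Fin m → ZMod 3)) :=
  { f | ∃ (A : Matrix (Fin m) (Fin m) (ZMod 3)) (b : Fin m → ZMod 3),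
      IsUnit A ∧ ∀ x, f x = A.mulVec x + b }

/-!
In characteristic 2 a primitive cube root of unity `α` satisfies `α + α² = 1`, so
`x ↦ α^(x·j) + α^(-x·j)` is binary-valued: it is the indicator of the complement of the hyperplane
`j^⊥`, and for `j ≠ 0` its spectrum is supported on `±j`. This word therefore lies in `C(3, m, W)`
exactly when the weight of `j` belongs to `W`. Linear coordinate changes send these words to each
other and act transitively on the nonzero frequencies, so an invariant code contains all of them or
none; hence `W` contains all positive weights or none, which is a boundary case.
-/

lemma exists_hammingNorm_eq {ι : Type*} {β : Type*} [Fintype ι] [DecidableEq β] [Zero β]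
    [Nontrivial β] {w : ℕ} (hw : w ≤ Fintype.card ι) : ∃ x : ι → β, hammingNorm x = w := by
  classical
  obtain ⟨s, -, hs⟩ := Finset.exists_subset_card_eq (s := (Finset.univ : Finset ι)) hw
  obtain ⟨b, hb⟩ := exists_ne (0 : β)
  refine ⟨fun k => if k ∈ s then b else 0, ?_⟩
  simpa [hammingNorm, hb] using hs

lemma hammingNorm_neg {ι : Type*} {β : ι → Type*} [Fintype ι] [∀ i, AddGroup (β i)]
    [∀ i, DecidableEq (β i)] (x : ∀ i, β i) : hammingNorm (-x) = hammingNorm x :=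
  hammingNorm_comp (fun _ b => -b) (fun _ => neg_injective) fun _ => neg_zero

lemma exists_linearEquiv_apply_eq {F V : Type*} [DivisionRing F] [AddCommGroup V] [Module F V]
    {u v : V} (hu : u ≠ 0) (hv : v ≠ 0) : ∃ g : V ≃ₗ[F] V, g u = v := by
  let lineEquiv := (LinearEquiv.toSpanNonzeroSingleton F V u hu).symm ≪≫ₗ
    LinearEquiv.toSpanNonzeroSingleton F V v hv
  obtain ⟨g, hg⟩ := Submodule.exists_linearEquiv_restrict_eq lineEquiv
  have hgu := hg (LinearEquiv.toSpanNonzeroSingleton F V u hu 1)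
  simp only [lineEquiv, LinearEquiv.trans_apply, LinearEquiv.symm_apply_apply] at hgu
  exact ⟨g, by simpa using hgu.symm⟩

lemma exists_gl_vecMul_eq {ι F : Type*} [Fintype ι] [DecidableEq ι] [Field F]
    {u v : ι → F} (hu : u ≠ 0) (hv : v ≠ 0) : ∃ A : GL ι F, u ᵥ* A.val = v := by
  obtain ⟨g, hg⟩ := exists_linearEquiv_apply_eq (F := F) hu hv
  let M := LinearMap.toMatrixRight' g.toLinearMap
  have hM (x : ι → F) : x ᵥ* M = g x :=
    DFunLike.congr_fun (LinearMap.toMatrixRight'.symm_apply_apply g.toLinearMap) x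
  have hM_unit : IsUnit M :=
    Matrix.vecMul_surjective_iff_isUnit.1 fun y => ⟨g.symm y, by simp [hM]⟩
  exact ⟨hM_unit.unit, (hM u).trans hg⟩

lemma sum_addChar_dotProduct_s17 {ι R S : Type*} [Fintype ι] [DecidableEq ι] [CommRing R] [Fintype R]
    [DecidableEq R] [CommRing S] [IsDomain S] {χ : AddChar R S} (hχ : χ.IsPrimitive)
    (v : ι → R) :
    ∑ i : ι → R, χ (i ⬝ᵥ v) = if v = 0 then (Fintype.card (ι → R) : S) else 0 := by
  classical
  let ψ := χ.compAddMonoidHom ((dotProductBilin R R).flip v).toAddMonoidHom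
  have hψ_apply (i : ι → R) : ψ i = χ (i ⬝ᵥ v) := rfl
  have hψ : ψ = 0 ↔ v = 0 := by
    refine ⟨fun h => ?_, fun h => by ext i; simp [hψ_apply, h]⟩
    by_contra hv
    obtain ⟨k, hk⟩ := Function.ne_iff.1 hv
    refine hχ hk (DFunLike.ext _ _ fun t => ?_)
    simpa [hψ_apply, mul_comm] using DFunLike.congr_fun h (Pi.single k t)
  simp only [← hψ_apply, AddChar.sum_eq_ite, hψ]

lemma pow_val_add_pow_val_neg {S : Type*} [CommRing S] [IsDomain S] [CharP S 2] {α : S}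
    (hα : IsPrimitiveRoot α 3) (x : ZMod 3) :
    α ^ x.val + α ^ (-x).val = if x = 0 then 0 else 1 := by
  have h_two : (2 : S) = 0 := CharTwo.two_eq_zero
  have h_geom : 1 + α + α ^ 2 = 0 := by
    simpa [Finset.sum_range_succ] using hα.geom_sum_eq_zero (by norm_num)
  obtain rfl | rfl | rfl : x = 0 ∨ x = 1 ∨ x = 2 := by decide +revert
  · simp [one_add_one_eq_two, h_two]
  · change α ^ 1 + α ^ 2 = 1
    linear_combination h_geom - h_two
  · change α ^ 2 + α ^ 1 = 1
    linear_combination h_geom - h_two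

section Spectrum

variable {ι : Type*} [Fintype ι]

/-- The binary vector on `F_3^ι` supported on the complement of the hyperplane orthogonal to `j`.
For `j ≠ 0` its spectrum over a field of characteristic 2 is the indicator of `{j, -j}`. -/
def hyperplaneComplWord (j : ι → ZMod 3) : (ι → ZMod 3) → ZMod 2 :=
  fun i => if j ⬝ᵥ i = 0 then 0 else 1

lemma hyperplaneComplWord_mulVec (A : Matrix ι ι (ZMod 3)) (j i : ι → ZMod 3) :
    hyperplaneComplWord j (A *ᵥ i) = hyperplaneComplWord (j ᵥ* A) i := by
  simp only [hyperplaneComplWord, dotProduct_mulVec]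

variable [DecidableEq ι]

/-- The Fourier component at frequency `j` of the binary vector `a` indexed by `(Z_n)^ι`. The bits
are embedded in `S` by `0 ↦ 0` and `1 ↦ 1`; this map is additive only in characteristic 2. -/
def binaryDFT {n : ℕ} [NeZero n] {S : Type*} [CommSemiring S] (α : S)
    (a : (ι → ZMod n) → ZMod 2) (j : ι → ZMod n) : S :=
  ∑ i : ι → ZMod n, (if a i = 1 then 1 else 0) * α ^ (i ⬝ᵥ j).val

lemma binaryDFT_hyperplaneComplWord {S : Type*} [CommRing S] [IsDomain S] [CharP S 2] {α : S}
    (hα : IsPrimitiveRoot α 3) (j l : ι → ZMod 3) :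
    binaryDFT α (hyperplaneComplWord j) l =
      (if l + j = 0 then 1 else 0) + (if l - j = 0 then 1 else 0) := by
  let χ := AddChar.zmodChar 3 hα.pow_eq_one
  have hχ : χ.IsPrimitive := AddChar.zmodChar_primitive_of_primitive_root 3 hα
  have h_bit (i : ι → ZMod 3) :
      (if hyperplaneComplWord j i = 1 then (1 : S) else 0) = χ (i ⬝ᵥ j) + χ (-(i ⬝ᵥ j)) := by
    rw [AddChar.zmodChar_apply, AddChar.zmodChar_apply, pow_val_add_pow_val_neg hα,
      hyperplaneComplWord, dotProduct_comm]
    split_ifs <;> simp_all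
  have h_card : (Fintype.card (ι → ZMod 3) : S) = 1 := by
    rw [CharTwo.natCast_eq_ite, if_neg]
    simp [Nat.even_pow, show ¬ Even 3 by decide]
  calc binaryDFT α (hyperplaneComplWord j) l
      = ∑ i : ι → ZMod 3, (χ (i ⬝ᵥ j) + χ (-(i ⬝ᵥ j))) * χ (i ⬝ᵥ l) :=
        Finset.sum_congr rfl fun i _ => by rw [h_bit]; rfl
    _ = ∑ i : ι → ZMod 3, (χ (i ⬝ᵥ (l + j)) + χ (i ⬝ᵥ (l - j))) := by
        refine Finset.sum_congr rfl fun i _ => ?_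
        rw [dotProduct_add, dotProduct_sub, sub_eq_add_neg, AddChar.map_add_eq_mul,
          AddChar.map_add_eq_mul]
        ring
    _ = (if l + j = 0 then 1 else 0) + (if l - j = 0 then 1 else 0) := by
        rw [Finset.sum_add_distrib, sum_addChar_dotProduct_s17 hχ, sum_addChar_dotProduct_s17 hχ, h_card]

end Spectrum

section AbelianCode

variable {m : ℕ} {W : Set ℕ} {K : Type} [Field K] {α : K}

lemma mem_abelianCode_iff {n : ℕ} [NeZero n] {a : (Fin m → ZMod n) → ZMod 2} :
    a ∈ abelianCode n m W K α ↔ ∀ j, hammingNorm j ∉ W → binaryDFT α a j = 0 :=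
  Iff.rfl

lemma hyperplaneComplWord_mem_abelianCode_iff [CharP K 2] (hα : IsPrimitiveRoot α 3)
    {j : Fin m → ZMod 3} (hj : j ≠ 0) :
    hyperplaneComplWord j ∈ abelianCode 3 m W K α ↔ hammingNorm j ∈ W := by
  simp only [mem_abelianCode_iff, binaryDFT_hyperplaneComplWord hα]
  constructor
  · intro h
    by_contra hjW
    have h_double (x : ZMod 3) : x + x = 0 → x = 0 := by decide +revert
    have hj_add : j + j ≠ 0 := fun h_add => hj (funext fun k => h_double _ (congrFun h_add k))
    simpa [hj_add] using h j hjW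
  · intro hjW l hlW
    have hl_ne : l ≠ j := by rintro rfl; exact hlW hjW
    have hl_ne_neg : l ≠ -j := by rintro rfl; exact hlW ((hammingNorm_neg j).symm ▸ hjW)
    simp [sub_eq_zero, add_eq_zero_iff_eq_neg, hl_ne, hl_ne_neg]

end AbelianCode

lemma comp_mulVec_mem_of_aglSet_subset {m : ℕ} {C : Set ((Fin m → ZMod 3) → ZMod 2)}
    (hC : aglSet m ⊆ codeAut C) (A : GL (Fin m) (ZMod 3)) {c : (Fin m → ZMod 3) → ZMod 2}
    (hc : c ∈ C) : (fun x => c (A.val *ᵥ x)) ∈ C := by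
  let e : Equiv.Perm (Fin m → ZMod 3) :=
    (Matrix.GeneralLinearGroup.toLin A).toLinearEquiv.toEquiv.symm
  have he : e ∈ aglSet m := by
    refine ⟨A⁻¹.val, 0, A⁻¹.isUnit, fun x => ?_⟩
    rw [add_zero, Equiv.symm_apply_eq]
    change x = A.val *ᵥ A⁻¹.val *ᵥ x
    rw [mulVec_mulVec, A.mul_inv, one_mulVec]
  have h_image : (fun c => c ∘ e.symm) '' C = C := hC he
  rw [← h_image]
  exact ⟨c, hc, rfl⟩

lemma hammingNorm_mem_of_aglSet_subset {m : ℕ} {W : Set ℕ} {K : Type} [Field K] [CharP K 2]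
    {α : K} (hα : IsPrimitiveRoot α 3) (hagl : aglSet m ⊆ codeAut (abelianCode 3 m W K α))
    {u v : Fin m → ZMod 3} (hu : u ≠ 0) (hv : v ≠ 0) (huW : hammingNorm u ∈ W) :
    hammingNorm v ∈ W := by
  obtain ⟨A, hA⟩ := exists_gl_vecMul_eq hu hv
  rw [← hyperplaneComplWord_mem_abelianCode_iff hα hu] at huW
  have h_comp := comp_mulVec_mem_of_aglSet_subset hagl A huW
  simp only [hyperplaneComplWord_mulVec, hA] at h_comp
  exact (hyperplaneComplWord_mem_abelianCode_iff hα hv).1 h_comp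

lemma boundaryW_of_Icc_subset_of_pos_mem {m : ℕ} {W : Set ℕ} (hW : W ⊆ Set.Iic m)
    (h : ∀ w ∈ W, 0 < w → Set.Icc 1 m ⊆ W) : BoundaryW m W := by
  by_cases h_pos : ∃ w ∈ W, 0 < w
  · obtain ⟨w, hwW, hw⟩ := h_pos
    have h_Icc := h w hwW hw
    by_cases h0 : 0 ∈ W
    · refine Or.inr (Or.inr (Or.inr (hW.antisymm fun k hk => ?_)))
      obtain rfl | hk0 := k.eq_zero_or_pos
      exacts [h0, h_Icc ⟨hk0, hk⟩]
    · refine Or.inr (Or.inr (Or.inl (Set.Subset.antisymm (fun k hk => ⟨?_, hW hk⟩) h_Icc)))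
      exact Nat.one_le_iff_ne_zero.2 fun hk0 => h0 (hk0 ▸ hk)
  · have h_sub : W ⊆ {0} := fun w hw => by
      by_contra hw0
      exact h_pos ⟨w, hw, Nat.pos_of_ne_zero hw0⟩
    exact (Set.subset_singleton_iff_eq.1 h_sub).imp_right Or.inl

/-- For any non-boundary weight set `W ⊆ {0, 1, …, m}`, the affine
general linear group `AGL(m, 3)` is not contained in the automorphism group of `C(3, m, W)`. -/
theorem statement17 (m : ℕ) (hm : 1 ≤ m) (W : Set ℕ) (hW : W ⊆ Set.Iic m)
    (hWb : ¬ BoundaryW m W)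
    (K : Type) [Field K] [CharP K 2] (α : K) (hα : IsPrimitiveRoot α 3) :
    ¬ (aglSet m ⊆ codeAut (abelianCode 3 m W K α)) := by
  intro hagl
  refine hWb (boundaryW_of_Icc_subset_of_pos_mem hW fun w₁ hw₁W hw₁ w₂ hw₂ => ?_)
  obtain ⟨u, rfl⟩ := exists_hammingNorm_eq (β := ZMod 3) ((hW hw₁W).trans (Fintype.card_fin m).ge)
  obtain ⟨v, rfl⟩ := exists_hammingNorm_eq (β := ZMod 3) (hw₂.2.trans (Fintype.card_fin m).ge)
  exact hammingNorm_mem_of_aglSet_subset hα hagl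
    (hammingNorm_pos_iff.1 hw₁) (hammingNorm_pos_iff.1 hw₂.1) hw₁W
end
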